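/- Let n ≥ 2 and let a, b, c be three pairwise distinct unordered pairs of distinct vertices in Fin n. If χ(a) + χ(b) ∈ C(n-1), χ(b) + χ(c) ∈ C(n-1), and χ(a) + χ(c) ∈ C(n-1), then either χ(a) + χ(b) + χ(c) = 0 or a ∩ b = a ∩ c = b ∩ c. -/

import Mathlib

/-- The coding vector of an unordered pair of vertices of `Fin n`:
for `e = {i,j}` with `i < j`, coordinate `k` is `1` iff `i ≤ k < j`. -/
def chi (n : ℕ) : Sym2 (Fin n) → (Fin (n - 1) → ZMod 2) :=
  Sym2.lift ⟨fun i j k => if min i.val j.val ≤ k.val ∧ k.val < max i.val j.val then 1 else 0,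
    fun i j => by funext k; dsimp only; rw [min_comm, max_comm]⟩

/-- `Cseg N` is the set of nonzero vectors of `Fin N → ZMod 2` whose support is an
interval of consecutive indices (the consecutive 1's property). -/
def Cseg (N : ℕ) : Set (Fin N → ZMod 2) :=
  {v | v ≠ 0 ∧ ∃ a b : ℕ, ∀ k : Fin N, v k = 1 ↔ a ≤ k.val ∧ k.val < b}

/-- A finite set of vectors is reduced if it is nonempty and every nonempty proper
subset has nonzero sum. -/
def IsReducedSet {N : ℕ} (S : Finset (Fin N → ZMod 2)) : Prop :=
  S.Nonempty ∧ ∀ A : Finset (Fin N → ZMod 2), A ⊂ S → A.Nonempty → ∑ v ∈ A, v ≠ 0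

/-!
Put `N = n - 1` and regard a vector of `Fin N → ZMod 2` as a set of edges of the path `0, …, N`.
Then `χ({i, j})` is the edge set of the subpath from `i` to `j`, so its boundary mod 2 is `{i, j}`.
A segment is itself a subpath, so its boundary has at most two vertices, whereas disjoint pairs
`a`, `b` would give `χ(a) + χ(b)` a boundary of four vertices. Hence the three pairs meet pairwise,
which makes them either a triangle, whose coding vectors telescope to `0`, or a star.
-/

lemma triangle_or_star_of_pairwise_meet {α : Type*} {e f g : Sym2 α} (hef : ∃ x, x ∈ e ∧ x ∈ f)
    (hfg : ∃ x, x ∈ f ∧ x ∈ g) (heg : ∃ x, x ∈ e ∧ x ∈ g) :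
    (∃ x y z, e = s(x, y) ∧ f = s(y, z) ∧ g = s(x, z)) ∨ ∃ x, x ∈ e ∧ x ∈ f ∧ x ∈ g := by
  obtain ⟨y, hye, hyf⟩ := hef
  obtain ⟨z, hzf, hzg⟩ := hfg
  obtain ⟨x, hxe, hxg⟩ := heg
  by_cases hxy : x = y
  · exact .inr ⟨x, hxe, hxy ▸ hyf, hxg⟩
  by_cases hyz : y = z
  · exact .inr ⟨y, hye, hyf, hyz ▸ hzg⟩
  by_cases hxz : x = z
  · exact .inr ⟨x, hxe, hxz ▸ hzf, hxg⟩
  exact .inl ⟨x, y, z, (Sym2.mem_and_mem_iff hxy).mp ⟨hxe, hye⟩,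
    (Sym2.mem_and_mem_iff hyz).mp ⟨hyf, hzf⟩, (Sym2.mem_and_mem_iff hxz).mp ⟨hxg, hzg⟩⟩

lemma toFinset_inter_toFinset_eq_singleton {α : Type*} [DecidableEq α] {e f : Sym2 α} {x : α}
    (hef : e ≠ f) (hxe : x ∈ e) (hxf : x ∈ f) : e.toFinset ∩ f.toFinset = {x} := by
  ext y
  simp only [Finset.mem_inter, Sym2.mem_toFinset, Finset.mem_singleton]
  refine ⟨fun ⟨hye, hyf⟩ => ?_, fun hyx => hyx ▸ ⟨hxe, hxf⟩⟩
  by_contra hyx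
  exact hef (Sym2.eq_of_ne_mem hyx hye hxe hyf hxf)

lemma chi_mk_apply {n : ℕ} (i j : Fin n) (k : Fin (n - 1)) :
    chi n s(i, j) k = if min i.val j.val ≤ k.val ∧ k.val < max i.val j.val then 1 else 0 :=
  rfl

lemma chi_add_chi {n : ℕ} (x y z : Fin n) : chi n s(x, y) + chi n s(y, z) = chi n s(x, z) := by
  funext k
  simp only [Pi.add_apply, chi_mk_apply]
  split_ifs <;> first | decide | omega

lemma chi_self {n : ℕ} (x : Fin n) : chi n s(x, x) = 0 :=
  add_eq_left.mp (chi_add_chi x x x)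

lemma chi_castSucc_succ {N : ℕ} (k : Fin N) :
    chi (N + 1) s(k.castSucc, k.succ) = Pi.single k 1 := by
  funext t
  rw [chi_mk_apply, Pi.single_apply]
  refine if_congr ?_ rfl rfl
  simp only [Fin.ext_iff, Fin.val_castSucc, Fin.val_succ]
  omega

lemma exists_chi_eq_of_mem_Cseg {N : ℕ} {v : Fin N → ZMod 2} (hv : v ∈ Cseg N) :
    ∃ e, chi (N + 1) e = v := by
  obtain ⟨-, a, b, hab⟩ := hv
  -- Capping at `N` and taking `max a b` turns arbitrary bounds into ordered vertices of the path.
  let x : Fin (N + 1) := ⟨min a N, by omega⟩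
  let y : Fin (N + 1) := ⟨min (max a b) N, by omega⟩
  refine ⟨s(x, y), funext fun k => ?_⟩
  have mem_iff : min x.val y.val ≤ k.val ∧ k.val < max x.val y.val ↔ v k = 1 := by
    have := k.isLt
    grind
  rw [chi_mk_apply, if_congr mem_iff rfl rfl]
  exact (by decide : ∀ z : ZMod 2, (if z = 1 then 1 else 0) = z) (v k)

/-- The mod 2 boundary map of the path on the vertices `0, …, N`, whose `k`-th edge joins `k` and
`k + 1`; it recovers from a coding vector the pair that it encodes. -/
def pathBoundary (N : ℕ) : (Fin N → ZMod 2) →ₗ[ZMod 2] (Fin (N + 1) → ZMod 2) :=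
  Fintype.linearCombination (ZMod 2) fun k => Pi.single k.castSucc 1 + Pi.single k.succ 1

lemma pathBoundary_single {N : ℕ} (k : Fin N) :
    pathBoundary N (Pi.single k 1) = Pi.single k.castSucc 1 + Pi.single k.succ 1 := by
  rw [pathBoundary, Fintype.linearCombination_apply_single, one_smul]

lemma pathBoundary_chi_zero {N : ℕ} (j : Fin (N + 1)) :
    pathBoundary N (chi (N + 1) s(0, j)) = Pi.single 0 1 + Pi.single j 1 := by
  induction j using Fin.induction with
  | zero => rw [chi_self, map_zero, ZModModule.add_self]
  | succ k ih =>
    rw [← chi_add_chi 0 k.castSucc k.succ, map_add, ih, chi_castSucc_succ, pathBoundary_single,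
      ZModModule.add_add_add_cancel]

lemma pathBoundary_chi {N : ℕ} (i j : Fin (N + 1)) :
    pathBoundary N (chi (N + 1) s(i, j)) = Pi.single i 1 + Pi.single j 1 := by
  rw [← chi_add_chi i 0 j, Sym2.eq_swap, map_add, pathBoundary_chi_zero, pathBoundary_chi_zero,
    add_comm (Pi.single 0 1), ZModModule.add_add_add_cancel]

lemma exists_mem_of_single_add_single_eq {α : Type*} [DecidableEq α] {i j k l x y : α}
    (hij : i ≠ j) (hkl : k ≠ l)
    (h : (Pi.single i 1 + Pi.single j 1 + (Pi.single k 1 + Pi.single l 1) : α → ZMod 2) =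
      Pi.single x 1 + Pi.single y 1) : ∃ t, t ∈ s(i, j) ∧ t ∈ s(k, l) := by
  by_contra! hdisj
  simp only [Sym2.mem_iff, forall_eq_or_imp, forall_eq, not_or] at hdisj
  obtain ⟨⟨hik, hil⟩, hjk, hjl⟩ := hdisj
  have mem_pair {t : α} (ht : (Pi.single x 1 + Pi.single y 1 : α → ZMod 2) t = 1) :
      t = x ∨ t = y := by
    by_contra! hne
    simp [hne] at ht
  have hi : i = x ∨ i = y := mem_pair (by rw [← h]; simp [hij, hik, hil])
  have hj : j = x ∨ j = y := mem_pair (by rw [← h]; simp [hij.symm, hjk, hjl])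
  have hk : k = x ∨ k = y := mem_pair (by rw [← h]; simp [hkl, Ne.symm hik, Ne.symm hjk])
  -- Pigeonhole: three distinct vertices cannot all lie in `{x, y}`.
  grind

lemma exists_mem_of_chi_add_chi_mem_Cseg {n : ℕ} {i j k l : Fin n} (hij : i ≠ j) (hkl : k ≠ l)
    (h : chi n s(i, j) + chi n s(k, l) ∈ Cseg (n - 1)) : ∃ x, x ∈ s(i, j) ∧ x ∈ s(k, l) := by
  obtain _ | N := n
  · exact i.elim0
  obtain ⟨⟨x, y⟩, hxy⟩ := exists_chi_eq_of_mem_Cseg h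
  apply exists_mem_of_single_add_single_eq (x := x) (y := y) hij hkl
  calc
    _ = pathBoundary N (chi (N + 1) s(i, j)) + pathBoundary N (chi (N + 1) s(k, l)) := by
      rw [pathBoundary_chi, pathBoundary_chi]
    _ = pathBoundary N (chi (N + 1) s(i, j) + chi (N + 1) s(k, l)) := (map_add _ _ _).symm
    _ = pathBoundary N (chi (N + 1) s(x, y)) := congrArg _ hxy.symm
    _ = Pi.single x 1 + Pi.single y 1 := pathBoundary_chi x y

theorem stmt17 (n : ℕ) (hn : 2 ≤ n) (i j k l r s : Fin n)
    (hij : i ≠ j) (hkl : k ≠ l) (hrs : r ≠ s)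
    (hab : s(i, j) ≠ s(k, l)) (hac : s(i, j) ≠ s(r, s)) (hbc : s(k, l) ≠ s(r, s))
    (h1 : chi n s(i, j) + chi n s(k, l) ∈ Cseg (n - 1))
    (h2 : chi n s(k, l) + chi n s(r, s) ∈ Cseg (n - 1))
    (h3 : chi n s(i, j) + chi n s(r, s) ∈ Cseg (n - 1)) :
    chi n s(i, j) + chi n s(k, l) + chi n s(r, s) = 0 ∨
      (({i, j} ∩ {k, l} : Finset (Fin n)) = {i, j} ∩ {r, s} ∧
        ({i, j} ∩ {r, s} : Finset (Fin n)) = {k, l} ∩ {r, s}) := by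
  have meet_ab := exists_mem_of_chi_add_chi_mem_Cseg hij hkl h1
  have meet_bc := exists_mem_of_chi_add_chi_mem_Cseg hkl hrs h2
  have meet_ac := exists_mem_of_chi_add_chi_mem_Cseg hij hrs h3
  obtain ⟨x, y, z, ha, hb, hc⟩ | ⟨x, ha, hb, hc⟩ :=
    triangle_or_star_of_pairwise_meet meet_ab meet_bc meet_ac
  · left
    rw [ha, hb, hc, chi_add_chi, ZModModule.add_self]
  · right
    simp only [← Sym2.toFinset_mk_eq]
    rw [toFinset_inter_toFinset_eq_singleton hab ha hb,
      toFinset_inter_toFinset_eq_singleton hac ha hc,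
      toFinset_inter_toFinset_eq_singleton hbc hb hc]
    exact ⟨rfl, rfl⟩
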